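/- A free product G₁ * G₂ of two groups is left-orderable if and only if both G₁ and G₂ are left-orderable. -/

import Mathlib

/-- A group is left-orderable if it admits a strict total order invariant under
left multiplication. -/
def IsLeftOrderable (G : Type*) [Group G] : Prop :=
  ∃ r : G → G → Prop, IsStrictTotalOrder G r ∧ ∀ f g h : G, r g h → r (f * g) (f * h)

namespace VinoLO

set_option linter.unusedSectionVars false

open Monoid

/-- A sign-like function on a group which detects a left order. -/
structure IsSgn {G : Type*} [Group G] (t : G → ℤ) : Prop where
  inv : ∀ x, t x⁻¹ = - t x
  ne : ∀ x, x ≠ 1 → Odd (t x)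
  mul : ∀ x y, |t (x * y) - t x - t y| ≤ 1

theorem IsSgn.leftOrderable {G : Type*} [Group G] {t : G → ℤ} (h : IsSgn t) :
    IsLeftOrderable G := by
  have h1 : t 1 = 0 := by
    have := h.inv 1
    rw [inv_one] at this
    omega
  refine ⟨fun a b => 0 < t (a⁻¹ * b), ?_, ?_⟩
  · refine { trichotomous := ?_, irrefl := ?_, trans := ?_ }
    · intro a b hab hba
      by_contra hne
      obtain ⟨k, h2⟩ := h.ne (a⁻¹ * b) (by rwa [Ne, inv_mul_eq_one])
      have h3 := h.inv (a⁻¹ * b)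
      rw [mul_inv_rev, inv_inv] at h3
      omega
    · intro a
      simp [h1]
    · intro a b c hab hbc
      have h4 := abs_le.1 (h.mul (a⁻¹ * b) (b⁻¹ * c))
      have h5 : a⁻¹ * b * (b⁻¹ * c) = a⁻¹ * c := by group
      rw [h5] at h4
      show 0 < t (a⁻¹ * c)
      omega
  · intro f g k hgk
    have : (f * g)⁻¹ * (f * k) = g⁻¹ * k := by group
    show 0 < t ((f * g)⁻¹ * (f * k))
    rw [this]
    exact hgk

theorem exists_sgn {G : Type*} [Group G] (h : IsLeftOrderable G) :
    ∃ t : G → ℤ, IsSgn t := by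
  classical
  obtain ⟨r, hr, hm⟩ := h
  have irr : ∀ a, ¬ r a a := hr.irrefl
  have tr : ∀ a b c, r a b → r b c → r a c := hr.trans
  have tri : ∀ a b, ¬ r a b → ¬ r b a → a = b := hr.trichotomous
  have hinv : ∀ x, r 1 x⁻¹ ↔ r x 1 := fun x =>
    ⟨fun h => by simpa using hm x _ _ h, fun h => by simpa using hm x⁻¹ _ _ h⟩
  have hinv' : ∀ x, r x⁻¹ 1 ↔ r 1 x := fun x =>
    ⟨fun h => by simpa using hm x _ _ h, fun h => by simpa using hm x⁻¹ _ _ h⟩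
  have hpos : ∀ x y, r 1 x → r 1 y → r 1 (x * y) := fun x y hx hy =>
    tr _ _ _ hx (by simpa using hm x _ _ hy)
  have hneg : ∀ x y, r x 1 → r y 1 → r (x * y) 1 := fun x y hx hy =>
    tr _ _ _ (by simpa using hm x _ _ hy) hx
  have has : ∀ x, r 1 x → ¬ r x 1 := fun x h1 h2 => irr _ (tr _ _ _ h1 h2)
  refine ⟨fun x => if r 1 x then 1 else if r x 1 then -1 else 0, ?_, ?_, ?_⟩
  · intro x
    simp only [hinv, hinv']
    have := has x
    split_ifs <;> simp_all
  · intro x hx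
    have := tri 1 x
    split_ifs <;> simp_all
  · intro x y
    have a1 := hpos x y
    have a2 := hneg x y
    have a3 := has (x * y)
    have t1 := tri 1 x
    have t2 := tri 1 y
    by_cases hx : x = 1
    · subst hx; simp [irr]
    by_cases hy : y = 1
    · subst hy; simp [irr]
    have hx' := Ne.symm hx
    have hy' := Ne.symm hy
    replace t1 := fun h1 h2 => hx' (t1 h1 h2)
    replace t2 := fun h1 h2 => hy' (t2 h1 h2)
    clear hpos hneg has hinv hinv' tri tr irr hm hr hx hy hx' hy'
    generalize r 1 (x * y) = p at *
    generalize r (x * y) 1 = q at *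
    generalize r 1 x = p1 at *
    generalize r x 1 = q1 at *
    generalize r 1 y = p2 at *
    generalize r y 1 = q2 at *
    clear x y
    by_cases p <;> by_cases q <;> by_cases p1 <;> by_cases q1 <;> by_cases p2 <;> by_cases q2 <;> simp_all

theorem leftOrderable_of_injective {G H : Type*} [Group G] [Group H] (f : G →* H)
    (hf : Function.Injective f) (h : IsLeftOrderable H) : IsLeftOrderable G := by
  obtain ⟨t, ht⟩ := exists_sgn h
  refine IsSgn.leftOrderable (t := fun x => t (f x)) ⟨?_, ?_, ?_⟩
  · intro x; simp [ht.inv]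
  · intro x hx
    exact ht.ne _ (by rwa [Ne, map_eq_one_iff f hf])
  · intro x y; simpa using ht.mul (f x) (f y)

section
variable {G : Bool → Type*} [∀ i, Group (G i)]

abbrev Red (L : List (Σ i, G i)) : Prop :=
  (∀ l ∈ L, Sigma.snd l ≠ 1) ∧ L.IsChain (fun l l' => Sigma.fst l ≠ Sigma.fst l')

def pr (L : List (Σ i, G i)) : CoprodI G := (L.map fun l => CoprodI.of l.2).prod

def hd : List (Σ i, G i) → ℤ
  | [] => 0
  | a :: _ => if a.1 then 1 else 0

variable (t : ∀ i, G i → ℤ)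

def sm (L : List (Σ i, G i)) : ℤ := (L.map fun l => t l.1 l.2).sum

def tau (L : List (Σ i, G i)) : ℤ := sm t L + hd L - hd L.reverse

open Classical in
noncomputable def T (g : CoprodI G) : ℤ := tau t (CoprodI.Word.equiv g).toList

theorem T_pr (L : List (Σ i, G i)) (h : Red L) : T t (pr L) = tau t L := by
  classical
  have : CoprodI.Word.equiv (pr L) = (⟨L, h.1, h.2⟩ : CoprodI.Word G) := by
    rw [← Equiv.eq_symm_apply]; rfl
  unfold T
  convert congrArg (fun w : CoprodI.Word G => tau t w.toList) this

theorem exists_red (g : CoprodI G) : ∃ L, Red L ∧ pr L = g := by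
  classical
  exact ⟨(CoprodI.Word.equiv g).toList,
    ⟨(CoprodI.Word.equiv g).ne_one, (CoprodI.Word.equiv g).chain_ne⟩,
    CoprodI.Word.equiv.symm_apply_apply g⟩

theorem Red.reverse {L : List (Σ i, G i)} (h : Red L) : Red L.reverse := by
  refine ⟨fun l hl => h.1 l (by simpa using hl), ?_⟩
  rw [List.isChain_reverse]
  exact h.2.imp fun _ _ h => h.symm

def iv (L : List (Σ i, G i)) : List (Σ i, G i) := L.map fun l => ⟨l.1, l.2⁻¹⟩

theorem Red.iv {L : List (Σ i, G i)} (h : Red L) : Red (iv L) := by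
  refine ⟨?_, ?_⟩
  · intro l hl
    obtain ⟨a, ha, rfl⟩ := List.mem_map.1 hl
    simpa using h.1 a ha
  · rw [VinoLO.iv, List.isChain_map]
    exact h.2

theorem pr_append (L M : List (Σ i, G i)) : pr (L ++ M) = pr L * pr M := by simp [pr]

theorem sm_append (L M : List (Σ i, G i)) : sm t (L ++ M) = sm t L + sm t M := by simp [sm]

theorem sm_reverse (L : List (Σ i, G i)) : sm t L.reverse = sm t L := by
  simp [sm, List.map_reverse, List.sum_reverse]

theorem hd_append {L : List (Σ i, G i)} (h : L ≠ []) (M : List (Σ i, G i)) :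
    hd (L ++ M) = hd L := by
  cases L with
  | nil => exact absurd rfl h
  | cons a L => rfl

theorem hd_iv (L : List (Σ i, G i)) : hd (iv L) = hd L := by cases L <;> rfl

theorem iv_reverse (L : List (Σ i, G i)) : iv L.reverse = (iv L).reverse := by
  simp [iv, List.map_reverse]

theorem pr_inv (L : List (Σ i, G i)) : pr (iv L).reverse = (pr L)⁻¹ := by
  induction L with
  | nil => simp [pr, iv]
  | cons a L ih =>
    have : pr (iv (a :: L)).reverse = pr (iv L).reverse * (CoprodI.of a.2)⁻¹ := by
      simp [pr, iv]
    rw [this, ih]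
    simp [pr]

variable {t}

theorem T_inv (ht : ∀ i, IsSgn (t i)) (g : CoprodI G) : T t g⁻¹ = - T t g := by
  obtain ⟨L, hL, rfl⟩ := exists_red g
  rw [← pr_inv, T_pr _ _ hL.iv.reverse, T_pr _ _ hL]
  unfold tau
  have : sm t (iv L) = - sm t L := by
    clear hL
    induction L with
    | nil => simp [sm, iv]
    | cons a L ih =>
      simp only [sm, iv, List.map_cons, List.sum_cons, (ht _).inv] at ih ⊢
      omega
  rw [sm_reverse, this, ← iv_reverse, hd_iv, ← iv_reverse, List.reverse_reverse]
  rw [hd_iv]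
  ring

theorem red_tail {a : Σ i, G i} {L : List (Σ i, G i)} (h : Red (a :: L)) : Red L :=
  ⟨fun l hl => h.1 l (List.mem_cons_of_mem _ hl), h.2.tail⟩

theorem red_append {a b : Σ i, G i} {A B : List (Σ i, G i)} (hA : Red (a :: A))
    (hB : Red (b :: B)) (hab : a.1 ≠ b.1) : Red ((a :: A).reverse ++ b :: B) := by
  refine ⟨?_, ?_⟩
  · intro l hl
    rcases List.mem_append.1 hl with h | h
    · exact hA.1 l (List.mem_reverse.1 h)
    · exact hB.1 l h
  · rw [List.isChain_append]
    refine ⟨hA.reverse.2, hB.2, ?_⟩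
    intro x hx y hy
    simp at hx hy
    subst hx hy
    exact hab

theorem hd_cons_ne {i : Bool} {x : G i} {c : Σ i, G i} {A : List (Σ i, G i)}
    (h : Red (⟨i, x⟩ :: c :: A)) : hd (c :: A) = if i then 0 else 1 := by
  have := h.2
  rw [List.isChain_cons_cons] at this
  have h1 := this.1
  obtain ⟨j, z⟩ := c
  cases i <;> cases j <;> simp_all [hd]

theorem sm_cons (a : Σ i, G i) (L : List (Σ i, G i)) : sm t (a :: L) = t a.1 a.2 + sm t L := by
  simp [sm]

theorem pr_cons (a : Σ i, G i) (L : List (Σ i, G i)) : pr (a :: L) = CoprodI.of a.2 * pr L := by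
  simp [pr]

theorem hd_rev_cons {L : List (Σ i, G i)} (h : L ≠ []) (a : Σ i, G i) :
    hd (a :: L).reverse = hd L.reverse := by
  rw [List.reverse_cons, hd_append (by simpa using h)]

theorem tau_app (A B : List (Σ i, G i)) (hA : A ≠ []) (hB : B ≠ []) :
    tau t (A.reverse ++ B) = tau t A.reverse + tau t B + hd A - hd B := by
  unfold tau
  rw [List.reverse_append, hd_append (by simpa using hA), hd_append (by simpa using hB),
    sm_append, List.reverse_reverse]
  ring

theorem hd_bd (A : List (Σ i, G i)) : 0 ≤ hd A ∧ hd A ≤ 1 := by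
  cases A with
  | nil => simp [hd]
  | cons a A => simp only [hd]; split_ifs <;> simp

theorem key (ht : ∀ i, IsSgn (t i)) (A : List (Σ i, G i)) : ∀ B, Red A → Red B →
    |T t (pr A.reverse * pr B) - tau t A.reverse - tau t B| ≤ 1 := by
  induction A with
  | nil =>
    intro B _ hB
    have h1 := T_pr t B hB
    have h2 : tau t ([] : List (Σ i, G i)) = 0 := by simp [tau, sm, hd]
    have h3 : pr ([] : List (Σ i, G i)) = 1 := by simp [pr]
    rw [List.reverse_nil, h2, h3, one_mul, h1]
    simp
  | cons a A ih =>
    intro B hA hB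
    cases B with
    | nil =>
      have h1 := T_pr t _ hA.reverse
      have h2 : tau t ([] : List (Σ i, G i)) = 0 := by simp [tau, sm, hd]
      have h3 : pr ([] : List (Σ i, G i)) = 1 := by simp [pr]
      rw [h2, h3, mul_one, h1]
      simp
    | cons b B =>
      by_cases hab : a.1 = b.1
      · obtain ⟨i, x⟩ := a
        obtain ⟨j, y⟩ := b
        obtain rfl : i = j := hab
        have hA' := red_tail hA
        have hB' := red_tail hB
        have e : pr (⟨i, x⟩ :: A : List (Σ i, G i)).reverse * pr (⟨i, y⟩ :: B : List (Σ i, G i))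
            = pr A.reverse * (CoprodI.of (x * y) * pr B) := by
          simp [pr, mul_assoc]
        have tA : tau t (⟨i, x⟩ :: A : List (Σ i, G i)).reverse
            = if A = [] then t i x else
              tau t A.reverse + t i x + hd A - (if i then 1 else 0) := by
          split_ifs with h0 hi
          · subst h0; simp [tau, sm]
          all_goals
          · unfold tau
            rw [hd_rev_cons h0, sm_reverse, sm_reverse, sm_cons]
            simp only [List.reverse_reverse, hd, hi]
            simp
            ring
        have tB : ∀ z : G i, tau t (⟨i, z⟩ :: B : List (Σ i, G i))
            = if B = [] then t i z else
              tau t B + t i z - hd B + (if i then 1 else 0) := by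
          intro z
          split_ifs with h0 hi
          · subst h0; simp [tau, sm]
          all_goals
          · unfold tau
            rw [hd_rev_cons h0, sm_cons]
            simp only [hd, hi]
            simp
            ring
        have hAh : A ≠ [] → hd A = if i then 0 else 1 := by
          intro h
          cases A with
          | nil => exact absurd rfl h
          | cons c A => exact hd_cons_ne hA
        have hBh : B ≠ [] → hd B = if i then 0 else 1 := by
          intro h
          cases B with
          | nil => exact absurd rfl h
          | cons c B => exact hd_cons_ne hB
        have tn : tau t ([] : List (Σ i, G i)) = 0 := by simp [tau, sm, hd]
        have pn : pr ([] : List (Σ i, G i)) = 1 := by simp [pr]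
        by_cases hxy : x * y = 1
        · have hy : t i y = - t i x := by
            rw [← (ht i).inv, eq_inv_of_mul_eq_one_right hxy]
          rw [e, hxy, map_one, one_mul, tA, tB, hy]
          have IH := ih B hA' hB'
          by_cases hA0 : A = []
          · subst hA0
            have := T_pr t _ hB'
            simp only [List.reverse_nil, pn, one_mul, this, if_true]
            split_ifs with hB0 hi
            · subst hB0; simp [tn]
            all_goals
            · rw [hBh hB0, abs_le]; simp only [hi]; simp; linarith
          · by_cases hB0 : B = []
            · subst hB0
              have := T_pr t _ hA'.reverse
              simp only [pn, mul_one, this, if_true, if_neg hA0]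
              rw [hAh hA0, abs_le]
              split_ifs <;> constructor <;> linarith
            · rw [if_neg hA0, if_neg hB0, hAh hA0, hBh hB0]
              convert IH using 2
              ring
        · have hR : Red (⟨i, x * y⟩ :: B : List (Σ i, G i)) := by
            refine ⟨?_, ?_⟩
            · intro l hl
              rcases List.mem_cons.1 hl with rfl | h
              · exact hxy
              · exact hB'.1 l h
            · have := hB.2
              rw [List.isChain_cons] at this ⊢
              exact this
          have hm := (ht i).mul x y
          have e2 : CoprodI.of (x * y) * pr B = pr (⟨i, x * y⟩ :: B : List (Σ i, G i)) := by
            rw [pr_cons]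
          rw [e, e2]
          by_cases hA0 : A = []
          · subst hA0
            rw [List.reverse_nil, pn, one_mul, T_pr t _ hR, tA, tB, tB, if_pos rfl]
            convert hm using 2
            split_ifs <;> ring
          · have hR2 : Red (A.reverse ++ (⟨i, x * y⟩ :: B : List (Σ i, G i))) := by
              cases A with
              | nil => exact absurd rfl hA0
              | cons c A =>
                refine red_append hA' hR ?_
                have := hA.2
                rw [List.isChain_cons_cons] at this
                exact this.1.symm
            rw [← pr_append, T_pr t _ hR2, tau_app _ _ hA0 (by simp), tA, tB, tB, if_neg hA0]
            convert hm using 2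
            simp only [hd]
            split_ifs <;> ring
      · have hR := red_append hA hB hab
        rw [← pr_append, T_pr t _ hR, tau_app _ _ (by simp) (by simp)]
        have h1 := hd_bd (a :: A)
        have h2 := hd_bd (b :: B)
        rw [abs_le]
        constructor <;> linarith

theorem T_sgn (ht : ∀ i, IsSgn (t i)) : IsSgn (T t) := by
  refine ⟨T_inv ht, ?_, ?_⟩
  · intro g hg
    obtain ⟨L, hL, rfl⟩ := exists_red g
    rw [T_pr t L hL]
    have hne : L ≠ [] := by rintro rfl; exact hg (by simp [pr])
    clear hg
    induction L with
    | nil => exact absurd rfl hne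
    | cons a L ih =>
      obtain ⟨i, x⟩ := a
      have hx : Odd (t i x) := (ht i).ne x (hL.1 ⟨i, x⟩ (by simp))
      cases L with
      | nil => simpa [tau, sm] using hx
      | cons c L =>
        have h1 := ih (red_tail hL) (by simp)
        have h2 := hd_cons_ne hL
        have h3 : hd (⟨i, x⟩ :: c :: L : List (Σ i, G i)) = if i then 1 else 0 := rfl
        have h4 : tau t (⟨i, x⟩ :: c :: L : List (Σ i, G i)) = tau t (c :: L) + t i x - hd (c :: L)
            + hd (⟨i, x⟩ :: c :: L : List (Σ i, G i)) := by
          unfold tau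
          rw [hd_rev_cons (by simp), sm_cons]
          ring
        rw [h4, h2, h3]
        obtain ⟨p, hp⟩ := h1
        obtain ⟨q, hq⟩ := hx
        rw [hp, hq]
        split_ifs
        · exact ⟨p + q + 1, by ring⟩
        · exact ⟨p + q, by ring⟩
  · intro g h
    obtain ⟨L, hL, rfl⟩ := exists_red g
    obtain ⟨M, hM, rfl⟩ := exists_red h
    have := key ht L.reverse M hL.reverse hM
    rw [List.reverse_reverse] at this
    rwa [T_pr t L hL, T_pr t M hM]

end

theorem coprodI_lo {G : Bool → Type*} [∀ i, Group (G i)] (h : ∀ i, IsLeftOrderable (G i)) :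
    IsLeftOrderable (CoprodI G) := by
  choose t ht using fun i => exists_sgn (h i)
  exact (T_sgn ht).leftOrderable

universe u v

def Fam (G : Type u) (H : Type v) : Bool → Type (max u v)
  | true => ULift.{v} G
  | false => ULift.{u} H

instance (G : Type u) (H : Type v) [Group G] [Group H] : ∀ i, Group (Fam G H i)
  | true => inferInstanceAs (Group (ULift.{v} G))
  | false => inferInstanceAs (Group (ULift.{u} H))

theorem coprod_lo {G : Type u} {H : Type v} [Group G] [Group H] (hG : IsLeftOrderable G)
    (hH : IsLeftOrderable H) : IsLeftOrderable (Coprod G H) := by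
  let eG : Fam G H true ≃* G := (MulEquiv.ulift : ULift.{v} G ≃* G)
  let eH : Fam G H false ≃* H := (MulEquiv.ulift : ULift.{u} H ≃* H)
  have hF : ∀ i, IsLeftOrderable (Fam G H i) := by
    intro i
    cases i
    · exact leftOrderable_of_injective eH.toMonoidHom eH.injective hH
    · exact leftOrderable_of_injective eG.toMonoidHom eG.injective hG
  let f : Coprod G H →* CoprodI (Fam G H) :=
    Coprod.lift ((CoprodI.of (i := true)).comp eG.symm.toMonoidHom)
      ((CoprodI.of (i := false)).comp eH.symm.toMonoidHom)
  let k : ∀ i, Fam G H i →* Coprod G H := fun i => match i with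
    | true => Coprod.inl.comp eG.toMonoidHom
    | false => Coprod.inr.comp eH.toMonoidHom
  have hk : (CoprodI.lift k).comp f = MonoidHom.id _ := by
    apply Coprod.hom_ext
    · ext x
      simp [f, k]
    · ext x
      simp [f, k]
  refine leftOrderable_of_injective f ?_ (coprodI_lo hF)
  exact Function.LeftInverse.injective (g := CoprodI.lift k) fun x => DFunLike.congr_fun hk x

end VinoLO

/-- (Vinogradov) A free product `G₁ * G₂` is left-orderable iff both `G₁` and
`G₂` are left-orderable. -/
theorem freeProduct_leftOrderable_iff {G₁ G₂ : Type*} [Group G₁] [Group G₂] :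
    IsLeftOrderable (Monoid.Coprod G₁ G₂) ↔ IsLeftOrderable G₁ ∧ IsLeftOrderable G₂ := by
  constructor
  · intro h
    exact ⟨VinoLO.leftOrderable_of_injective Monoid.Coprod.inl Monoid.Coprod.inl_injective h,
      VinoLO.leftOrderable_of_injective Monoid.Coprod.inr Monoid.Coprod.inr_injective h⟩
  · rintro ⟨h₁, h₂⟩
    exact VinoLO.coprod_lo h₁ h₂
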